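/- arXiv:2010.00323 — 4 statements merged into one kernel-verified Lean document; each statement's English description precedes it below -/
import Mathlib

section
/- Let A be a symmetric 3×3 real matrix and fix indices i ≠ j in {1,2,3}. Then A is a scalar multiple of the identity matrix if and only if for every R ∈ SO(3) the conjugated matrix Ã = Rᵀ A R satisfies Ãᵢⱼ = 0. -/
/-!
Because the dimension is odd, one of `R` and `-R` has determinant one when `R` is orthogonal, and
both conjugate `A` to the same matrix, so the hypothesis extends from `SO(3)` to all of `O(3)`
(`entry_eq_zero_of_orthogonal`). Permuting the columns of `R` then moves the vanishing entry to any
off-diagonal position (`offDiag_eq_zero_of_orthogonal`). Taking `R = 1` shows that `A` is diagonal,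
and rotating two coordinate planes by an angle that is not a multiple of a right angle shows that
its diagonal entries agree.
-/

open Matrix

/-- Vanishing of one entry on the `SO(3)`-orbit implies its vanishing on the `O(3)`-orbit, since
`-1` has determinant `-1` and acts trivially by conjugation. -/
lemma entry_eq_zero_of_orthogonal {A : Matrix (Fin 3) (Fin 3) ℝ} {i j : Fin 3}
    (h : ∀ R : Matrix (Fin 3) (Fin 3) ℝ, Rᵀ * R = 1 → R.det = 1 → (Rᵀ * A * R) i j = 0)
    (R : Matrix (Fin 3) (Fin 3) ℝ) (hR : Rᵀ * R = 1) : (Rᵀ * A * R) i j = 0 := by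
  have hdet : R.det * R.det = 1 := by
    simpa using congrArg Matrix.det hR
  rcases mul_self_eq_one_iff.mp hdet with h1 | h1
  · exact h R hR h1
  · have := h (-R) (by simpa using hR) (by norm_num [Matrix.det_neg, h1])
    simpa using this

lemma offDiag_eq_zero_of_orthogonal {A : Matrix (Fin 3) (Fin 3) ℝ} {i j : Fin 3} (hij : i ≠ j)
    (h : ∀ R : Matrix (Fin 3) (Fin 3) ℝ, Rᵀ * R = 1 → R.det = 1 → (Rᵀ * A * R) i j = 0)
    {k l : Fin 3} (hkl : k ≠ l)
    (R : Matrix (Fin 3) (Fin 3) ℝ) (hR : Rᵀ * R = 1) : (Rᵀ * A * R) k l = 0 := by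
  obtain ⟨σ, rfl, rfl⟩ : ∃ σ : Equiv.Perm (Fin 3), σ i = k ∧ σ j = l := by
    clear h hR R A
    revert i j k l
    decide
  have horth : (R.submatrix id σ)ᵀ * R.submatrix id σ = 1 := by
    have : (R.submatrix id σ)ᵀ * R.submatrix id σ = (Rᵀ * R).submatrix σ σ := rfl
    rw [this, hR, Matrix.submatrix_one_equiv]
  exact entry_eq_zero_of_orthogonal h _ horth

/-- A symmetric 3×3 real matrix `A` is a scalar multiple of the identity iff for every
`R ∈ SO(3)` the conjugated matrix `Rᵀ * A * R` has vanishing `(i,j)` entry, where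
`i ≠ j` are fixed indices. -/
theorem stmt0 (A : Matrix (Fin 3) (Fin 3) ℝ) (hA : A.IsSymm)
    (i j : Fin 3) (hij : i ≠ j) :
    (∃ c : ℝ, A = c • (1 : Matrix (Fin 3) (Fin 3) ℝ)) ↔
      (∀ R : Matrix (Fin 3) (Fin 3) ℝ, Rᵀ * R = 1 → R.det = 1 →
        (Rᵀ * A * R) i j = 0) := by
  constructor
  · rintro ⟨c, rfl⟩ R hR -
    simp [hR, hij]
  · intro h
    have hoff : ∀ k l : Fin 3, k ≠ l → A k l = 0 := fun k l hkl => by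
      simpa using offDiag_eq_zero_of_orthogonal hij h hkl 1 (by simp)
    -- Rotations with cosine `3/5` and sine `4/5` avoid square roots; on a diagonal matrix the
    -- resulting off-diagonal entry is `12/25` times a difference of diagonal entries.
    have h01 := offDiag_eq_zero_of_orthogonal hij h (k := 0) (l := 1) (by decide)
      !![3/5, -4/5, 0; 4/5, 3/5, 0; 0, 0, 1]
      (by ext a b; fin_cases a <;> fin_cases b <;>
            simp [Matrix.mul_apply, Fin.sum_univ_three] <;> norm_num)
    have h12 := offDiag_eq_zero_of_orthogonal hij h (k := 1) (l := 2) (by decide)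
      !![1, 0, 0; 0, 3/5, -4/5; 0, 4/5, 3/5]
      (by ext a b; fin_cases a <;> fin_cases b <;>
            simp [Matrix.mul_apply, Fin.sum_univ_three] <;> norm_num)
    simp [Matrix.mul_apply, Fin.sum_univ_three, hoff 0 1, hoff 1 0] at h01
    simp [Matrix.mul_apply, Fin.sum_univ_three, hoff 1 2, hoff 2 1] at h12
    have e1 : A 1 1 = A 0 0 := by linarith
    have e2 : A 2 2 = A 0 0 := by linarith
    refine ⟨A 0 0, ?_⟩
    ext a b
    by_cases hab : a = b
    · subst hab
      fin_cases a <;> simp [e1, e2]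
    · simp [hoff a b hab, hab]
end

section
/- Let A be a symmetric 3×3 real matrix and fix indices k ≠ l in {1,2,3}. Then A is a scalar multiple of the identity matrix if and only if for every R ∈ SO(3) the conjugated matrix Ã = Rᵀ A R satisfies Ãₖₖ = Ãₗₗ. -/
open Matrix

/-!
Permuting the columns of a rotation `R` cyclically gives another rotation, and shifts the two
indices at which the diagonal of `Rᵀ * A * R` is compared. Up to order, any two distinct indices
in `Fin 3` are a cyclic shift of `k, l`, so the hypothesis for one pair implies it for all pairs.
Then `R = 1` shows that the diagonal entries of `A` agree, and a rotation by an angle with cosine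
`c` and sine `s` in the `(i, j)` coordinate plane gives `4 * c * s * A i j = 0`. The choice
`c = 3/5`, `s = 4/5` keeps the computation rational.
-/

theorem sign_addRight_fin_three (d : Fin 3) : Equiv.Perm.sign (Equiv.addRight d) = 1 := by
  revert d; decide

/-- Equality of two diagonal entries over all rotations passes to cyclically shifted indices,
since a cyclic permutation of three columns is even. -/
theorem diag_eq_shift (A : Matrix (Fin 3) (Fin 3) ℝ) (k l : Fin 3)
    (h : ∀ R : Matrix (Fin 3) (Fin 3) ℝ, Rᵀ * R = 1 → R.det = 1 →
      (Rᵀ * A * R) k k = (Rᵀ * A * R) l l) (d : Fin 3)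
    (R : Matrix (Fin 3) (Fin 3) ℝ) (hR : Rᵀ * R = 1) (hd : R.det = 1) :
    (Rᵀ * A * R) (k + d) (k + d) = (Rᵀ * A * R) (l + d) (l + d) := by
  have h1 : (R.submatrix id (Equiv.addRight d))ᵀ * R.submatrix id (Equiv.addRight d) = 1 := by
    have : (Rᵀ * R).submatrix (Equiv.addRight d) (Equiv.addRight d) = 1 := by
      rw [hR, submatrix_one_equiv]
    exact this
  have h2 : (R.submatrix id (Equiv.addRight d)).det = 1 := by
    rw [det_permute', sign_addRight_fin_three, hd]; simp
  exact h _ h1 h2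

theorem exists_shift (k l : Fin 3) (hkl : k ≠ l) (i j : Fin 3) (hij : i ≠ j) :
    ∃ d, (k + d = i ∧ l + d = j) ∨ (k + d = j ∧ l + d = i) := by
  revert k l i j; decide

/-- A symmetric 3×3 real matrix `A` is a scalar multiple of the identity iff for every
`R ∈ SO(3)` the conjugated matrix `Rᵀ * A * R` has equal `(k,k)` and `(l,l)` entries,
where `k ≠ l` are fixed indices. -/
theorem stmt1 (A : Matrix (Fin 3) (Fin 3) ℝ) (hA : A.IsSymm)
    (k l : Fin 3) (hkl : k ≠ l) :
    (∃ c : ℝ, A = c • (1 : Matrix (Fin 3) (Fin 3) ℝ)) ↔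
      (∀ R : Matrix (Fin 3) (Fin 3) ℝ, Rᵀ * R = 1 → R.det = 1 →
        (Rᵀ * A * R) k k = (Rᵀ * A * R) l l) := by
  constructor
  · rintro ⟨c, rfl⟩ R hR -
    simp [hR]
  · intro h
    have all : ∀ i j : Fin 3, i ≠ j → ∀ R : Matrix (Fin 3) (Fin 3) ℝ, Rᵀ * R = 1 → R.det = 1 →
        (Rᵀ * A * R) i i = (Rᵀ * A * R) j j := by
      intro i j hij R hR hd
      obtain ⟨d, ⟨rfl, rfl⟩ | ⟨rfl, rfl⟩⟩ := exists_shift k l hkl i j hij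
      · exact diag_eq_shift A k l h d R hR hd
      · exact (diag_eq_shift A k l h d R hR hd).symm
    have d01 : A 0 0 = A 1 1 := by simpa using all 0 1 (by decide) 1 (by simp) (by simp)
    have d12 : A 1 1 = A 2 2 := by simpa using all 1 2 (by decide) 1 (by simp) (by simp)
    have s01 : A 1 0 = A 0 1 := hA.apply 0 1
    have s02 : A 2 0 = A 0 2 := hA.apply 0 2
    have s12 : A 2 1 = A 1 2 := hA.apply 1 2
    have o01 : A 0 1 = 0 := by
      have := all 0 1 (by decide) !![3/5, -4/5, 0; 4/5, 3/5, 0; 0, 0, 1]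
        (by ext i j; fin_cases i <;> fin_cases j <;>
          simp [mul_apply, Fin.sum_univ_three] <;> norm_num)
        (by simp [det_fin_three]; norm_num)
      simp [mul_apply, Fin.sum_univ_three] at this
      linarith
    have o02 : A 0 2 = 0 := by
      have := all 0 2 (by decide) !![3/5, 0, -4/5; 0, 1, 0; 4/5, 0, 3/5]
        (by ext i j; fin_cases i <;> fin_cases j <;>
          simp [mul_apply, Fin.sum_univ_three] <;> norm_num)
        (by simp [det_fin_three]; norm_num)
      simp [mul_apply, Fin.sum_univ_three] at this
      linarith
    have o12 : A 1 2 = 0 := by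
      have := all 1 2 (by decide) !![1, 0, 0; 0, 3/5, -4/5; 0, 4/5, 3/5]
        (by ext i j; fin_cases i <;> fin_cases j <;>
          simp [mul_apply, Fin.sum_univ_three] <;> norm_num)
        (by simp [det_fin_three]; norm_num)
      simp [mul_apply, Fin.sum_univ_three] at this
      linarith
    refine ⟨A 0 0, ?_⟩
    ext i j
    fin_cases i <;> fin_cases j <;> simp [*]
end

section
/- Let B be a 3×3 real matrix. Then B = 0 if and only if for every pair of matrices P, Q ∈ SO(3), the transformed matrix B̃ = Qᵀ B P satisfies the two quadratic equations B̃₁₂·B̃₂₂ + B̃₁₃·B̃₂₃ = 0 and B̃₁₂·B̃₃₂ + B̃₁₃·B̃₃₃ = 0. -/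
open Matrix

/-!
Write `u₀, u₁, u₂` for the rows of `Qᵀ * B`. Taking `P` to be each of the three cyclic
permutation matrices, the first equation says that any two of the three products
`u₀ₖ * u₁ₖ` sum to zero, so each of them vanishes; likewise for `u₀ₖ * u₂ₖ`
(`row_products_eq_zero`). Thus, for every column `b` of `B`, `⟨q₀, b⟩ * ⟨q₁, b⟩ = 0` and
`⟨q₀, b⟩ * ⟨q₂, b⟩ = 0` for all positively oriented orthonormal frames `q`. The standard
frame gives `b₀ * b₁ = b₀ * b₂ = 0`, and rotating it in the planes `(0, 1)` and `(0, 2)` gives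
`b₀ ^ 2 = b₁ ^ 2` and `b₀ ^ 2 = b₂ ^ 2`, hence `b = 0`.
-/

/-- Cyclic permutations of the columns of `M` suffice to separate the terms of the quadratic
equations, leaving the entrywise products of row `0` with rows `1` and `2`. -/
lemma row_products_eq_zero (M : Matrix (Fin 3) (Fin 3) ℝ)
    (h : ∀ P : Matrix (Fin 3) (Fin 3) ℝ, Pᵀ * P = 1 → P.det = 1 →
      (M * P) 0 1 * (M * P) 1 1 + (M * P) 0 2 * (M * P) 1 2 = 0 ∧
      (M * P) 0 1 * (M * P) 2 1 + (M * P) 0 2 * (M * P) 2 2 = 0) (k : Fin 3) :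
    M 0 k * M 1 k = 0 ∧ M 0 k * M 2 k = 0 := by
  have h₀ := h 1 (by simp) (by simp)
  have h₁ := h !![0, 0, 1; 1, 0, 0; 0, 1, 0]
    (by ext i j; fin_cases i <;> fin_cases j <;> simp [Matrix.mul_apply, Fin.sum_univ_three])
    (by simp [Matrix.det_fin_three])
  have h₂ := h !![0, 1, 0; 0, 0, 1; 1, 0, 0]
    (by ext i j; fin_cases i <;> fin_cases j <;> simp [Matrix.mul_apply, Fin.sum_univ_three])
    (by simp [Matrix.det_fin_three])
  simp [Matrix.mul_apply, Fin.sum_univ_three] at h₀ h₁ h₂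
  fin_cases k <;> constructor <;> dsimp <;> linarith [h₀.1, h₀.2, h₁.1, h₁.2, h₂.1, h₂.2]

/-- A 3×3 real matrix `B` vanishes iff for every pair `P, Q ∈ SO(3)` the transformed
matrix `B̃ = Qᵀ * B * P` satisfies `B̃₁₂B̃₂₂ + B̃₁₃B̃₂₃ = 0` and
`B̃₁₂B̃₃₂ + B̃₁₃B̃₃₃ = 0` (indices are 1-based in the informal statement,
`0`-based here). -/
theorem stmt3 (B : Matrix (Fin 3) (Fin 3) ℝ) :
    B = 0 ↔
      (∀ P Q : Matrix (Fin 3) (Fin 3) ℝ,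
        Pᵀ * P = 1 → P.det = 1 → Qᵀ * Q = 1 → Q.det = 1 →
        (Qᵀ * B * P) 0 1 * (Qᵀ * B * P) 1 1 + (Qᵀ * B * P) 0 2 * (Qᵀ * B * P) 1 2 = 0 ∧
        (Qᵀ * B * P) 0 1 * (Qᵀ * B * P) 2 1 + (Qᵀ * B * P) 0 2 * (Qᵀ * B * P) 2 2 = 0) := by
  constructor
  · rintro rfl
    simp
  intro h
  have key (Q : Matrix (Fin 3) (Fin 3) ℝ) (hQ : Qᵀ * Q = 1) (hd : Q.det = 1) (k : Fin 3) :=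
    row_products_eq_zero (Qᵀ * B) (fun P hP hPd => h P Q hP hPd hQ hd) k
  have column (k : Fin 3) : B 0 k = 0 ∧ B 1 k = 0 ∧ B 2 k = 0 := by
    have e := key 1 (by simp) (by simp) k
    -- The 3-4-5 angle keeps the rotations rational; any angle with
    -- `sin * cos ≠ 0` would do, as the mixed terms `b₀ * b₁`, `b₀ * b₂` already vanish.
    have r₁ := (key !![3/5, -4/5, 0; 4/5, 3/5, 0; 0, 0, 1]
      (by ext i j; fin_cases i <;> fin_cases j <;>
            simp [Matrix.mul_apply, Fin.sum_univ_three] <;> norm_num)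
      (by simp [Matrix.det_fin_three]; norm_num) k).1
    have r₂ := (key !![3/5, 0, -4/5; 0, 1, 0; 4/5, 0, 3/5]
      (by ext i j; fin_cases i <;> fin_cases j <;>
            simp [Matrix.mul_apply, Fin.sum_univ_three] <;> norm_num)
      (by simp [Matrix.det_fin_three]; norm_num) k).2
    simp only [transpose_one, one_mul] at e
    simp [Matrix.mul_apply, Fin.sum_univ_three, -mul_eq_zero] at r₁ r₂
    obtain ⟨e₁, e₂⟩ := e
    have s₁ : B 0 k ^ 2 = B 1 k ^ 2 := by linarith
    have s₂ : B 0 k ^ 2 = B 2 k ^ 2 := by linarith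
    have b₀ : B 0 k = 0 := by
      rcases mul_eq_zero.mp e₁ with h0 | h1
      · exact h0
      · simpa [h1] using s₁
    rw [b₀] at s₁ s₂
    exact ⟨b₀, by simpa using s₁.symm, by simpa using s₂.symm⟩
  ext i k
  obtain ⟨c₀, c₁, c₂⟩ := column k
  fin_cases i <;> simp [c₀, c₁, c₂]
end

section
/- Let A be a symmetric 3×3 real matrix and B a 3×3 real matrix. Suppose that for every pair P, Q ∈ SO(3), the transformed matrices Ã = Pᵀ A P and B̃ = Qᵀ B P satisfy B̃₃₂·(Ã₂₂ − Ã₃₃) = 0, B̃₂₃·(Ã₂₂ − Ã₃₃) = 0, B̃₂₂·Ã₂₃ = 0, and B̃₃₃·Ã₂₃ = 0. If A is not a scalar multiple of the identity, then B = 0. Conversely, if B = 0 then all four equations hold for every P, Q ∈ SO(3). -/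
/-!
For fixed `P`, letting `Q` run over the three cyclic permutation matrices moves every row of `B * P`
into the positions tested by the four equations. Hence the second and third columns of `B * P`
vanish as soon as `(Pᵀ A P)₂₂ ≠ (Pᵀ A P)₃₃` or `(Pᵀ A P)₂₃ ≠ 0` (`column_eqs`).

For `P` a cyclic permutation matrix this says that `B` kills `eᵢ` and `eⱼ` whenever `Aᵢᵢ ≠ Aⱼⱼ` or
`Aᵢⱼ ≠ 0`. Since `A` is symmetric and not scalar, some pair `i, j` has this property. If a second
pair does too, then `B = 0`. Otherwise `A` is scalar apart from the single off-diagonal entry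
`Aᵢⱼ ≠ 0`, and with `k` the remaining index the rotated frame `((3eᵢ + 4eₖ)/5, eⱼ)` has off-diagonal
entry `3Aᵢⱼ/5 ≠ 0`, so `B` kills `3eᵢ + 4eₖ`, hence also `eₖ`.
-/

open Matrix

/-- If the four equations hold for a given `P` and all `Q ∈ SO(3)`, then in every row the second
and third columns of `B * P` satisfy them, with no dependence on `Q`. -/
lemma column_eqs (B P M : Matrix (Fin 3) (Fin 3) ℝ)
    (h : ∀ Q : Matrix (Fin 3) (Fin 3) ℝ, Qᵀ * Q = 1 → Q.det = 1 →
        (Qᵀ * B * P) 2 1 * (M 1 1 - M 2 2) = 0 ∧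
        (Qᵀ * B * P) 1 2 * (M 1 1 - M 2 2) = 0 ∧
        (Qᵀ * B * P) 1 1 * M 1 2 = 0 ∧
        (Qᵀ * B * P) 2 2 * M 1 2 = 0) (i : Fin 3) :
    (B * P) i 1 * (M 1 1 - M 2 2) = 0 ∧ (B * P) i 2 * (M 1 1 - M 2 2) = 0 ∧
      (B * P) i 1 * M 1 2 = 0 ∧ (B * P) i 2 * M 1 2 = 0 := by
  have h1 := h 1 (by simp) (by simp)
  have h2 := h !![0, 0, 1; 1, 0, 0; 0, 1, 0]
    (by ext i j; fin_cases i <;> fin_cases j <;> simp [Matrix.mul_apply, Fin.sum_univ_three])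
    (by simp [Matrix.det_fin_three])
  have h3 := h !![0, 1, 0; 0, 0, 1; 1, 0, 0]
    (by ext i j; fin_cases i <;> fin_cases j <;> simp [Matrix.mul_apply, Fin.sum_univ_three])
    (by simp [Matrix.det_fin_three])
  simp only [Matrix.mul_assoc] at h1 h2 h3
  generalize B * P = N at *
  simp [Matrix.mul_apply, Fin.sum_univ_three] at h1 h2 h3
  simp only [mul_eq_zero, sub_eq_zero]
  fin_cases i <;> simp <;> grind

/-- Matrix-algebra core of Theorem 1.3: with `Ã = Pᵀ A P` and `B̃ = Qᵀ B P` for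
`P, Q ∈ SO(3)`, if the four equations `B̃₃₂(Ã₂₂ − Ã₃₃) = 0`, `B̃₂₃(Ã₂₂ − Ã₃₃) = 0`,
`B̃₂₂Ã₂₃ = 0`, `B̃₃₃Ã₂₃ = 0` always hold and `A` is not scalar, then `B = 0`;
conversely if `B = 0` then all four equations hold for every `P, Q ∈ SO(3)`. -/
theorem stmt4 (A B : Matrix (Fin 3) (Fin 3) ℝ) (hA : A.IsSymm) :
    ((∀ P Q : Matrix (Fin 3) (Fin 3) ℝ,
        Pᵀ * P = 1 → P.det = 1 → Qᵀ * Q = 1 → Q.det = 1 →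
        (Qᵀ * B * P) 2 1 * ((Pᵀ * A * P) 1 1 - (Pᵀ * A * P) 2 2) = 0 ∧
        (Qᵀ * B * P) 1 2 * ((Pᵀ * A * P) 1 1 - (Pᵀ * A * P) 2 2) = 0 ∧
        (Qᵀ * B * P) 1 1 * (Pᵀ * A * P) 1 2 = 0 ∧
        (Qᵀ * B * P) 2 2 * (Pᵀ * A * P) 1 2 = 0) →
      (¬ ∃ c : ℝ, A = c • (1 : Matrix (Fin 3) (Fin 3) ℝ)) → B = 0) ∧
    (B = 0 →
      ∀ P Q : Matrix (Fin 3) (Fin 3) ℝ,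
        Pᵀ * P = 1 → P.det = 1 → Qᵀ * Q = 1 → Q.det = 1 →
        (Qᵀ * B * P) 2 1 * ((Pᵀ * A * P) 1 1 - (Pᵀ * A * P) 2 2) = 0 ∧
        (Qᵀ * B * P) 1 2 * ((Pᵀ * A * P) 1 1 - (Pᵀ * A * P) 2 2) = 0 ∧
        (Qᵀ * B * P) 1 1 * (Pᵀ * A * P) 1 2 = 0 ∧
        (Qᵀ * B * P) 2 2 * (Pᵀ * A * P) 1 2 = 0) := by
  refine ⟨fun h hns => ?_, fun hB P Q _ _ _ _ => by simp [hB]⟩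
  have key := fun P h1 h2 => column_eqs B P (Pᵀ * A * P) (fun Q => h P Q h1 h2)
  have s10 : A 1 0 = A 0 1 := hA.apply 0 1
  have s20 : A 2 0 = A 0 2 := hA.apply 0 2
  have s21 : A 2 1 = A 1 2 := hA.apply 1 2
  have hns' : ¬ (A 0 1 = 0 ∧ A 0 2 = 0 ∧ A 1 2 = 0 ∧ A 0 0 = A 1 1 ∧ A 1 1 = A 2 2) := by
    rintro ⟨a, b, c, d, e⟩
    refine hns ⟨A 0 0, ?_⟩
    ext i j
    fin_cases i <;> fin_cases j <;> simp [*]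
  have k0 := key 1 (by simp) (by simp)
  have k1 := key !![0, 0, 1; 1, 0, 0; 0, 1, 0]
    (by
      ext i j
      fin_cases i <;> fin_cases j <;> simp [Matrix.mul_apply, Fin.sum_univ_three])
    (by simp [Matrix.det_fin_three])
  have k2 := key !![0, 1, 0; 0, 0, 1; 1, 0, 0]
    (by
      ext i j
      fin_cases i <;> fin_cases j <;> simp [Matrix.mul_apply, Fin.sum_univ_three])
    (by simp [Matrix.det_fin_three])
  -- Frames `((3eₖ - 4eᵢ)/5, (3eᵢ + 4eₖ)/5, eⱼ)`, one for each value of `k`.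
  have k3 := key !![3/5, 4/5, 0; -4/5, 3/5, 0; 0, 0, 1]
    (by
      ext i j
      fin_cases i <;> fin_cases j <;> simp [Matrix.mul_apply, Fin.sum_univ_three] <;> norm_num)
    (by simp [Matrix.det_fin_three]; norm_num)
  have k4 := key !![-4/5, 3/5, 0; 0, 0, 1; 3/5, 4/5, 0]
    (by
      ext i j
      fin_cases i <;> fin_cases j <;> simp [Matrix.mul_apply, Fin.sum_univ_three] <;> norm_num)
    (by simp [Matrix.det_fin_three]; norm_num)
  have k5 := key !![0, 0, 1; 3/5, 4/5, 0; -4/5, 3/5, 0]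
    (by
      ext i j
      fin_cases i <;> fin_cases j <;> simp [Matrix.mul_apply, Fin.sum_univ_three] <;> norm_num)
    (by simp [Matrix.det_fin_three]; norm_num)
  have row : ∀ i, B i 0 = 0 ∧ B i 1 = 0 ∧ B i 2 = 0 := by
    intro i
    replace k0 := k0 i
    replace k1 := k1 i
    replace k2 := k2 i
    replace k3 := k3 i
    replace k4 := k4 i
    replace k5 := k5 i
    -- Each equation becomes a disjunction: one factor or the other vanishes.
    simp [Matrix.mul_apply, Fin.sum_univ_three, sub_eq_zero, s10, s20, s21]
      at k0 k1 k2 k3 k4 k5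
    grind
  ext i j
  obtain ⟨a, b, c⟩ := row i
  fin_cases j <;> simp [*]
end
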